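/- arXiv:2201.12947 — 2 statements merged into one kernel-verified Lean document; each statement's English description precedes it below -/
import Mathlib

section
/- Let 0 < B ≤ 3, let μ be a probability measure on a measurable space X, let ρ_u : X → ℝ be measurable with 1/(1+exp(B)) ≤ ρ_u(x) ≤ 1/(1+exp(−B)) for μ-almost every x, and let α : X → ℝ be measurable with |α(x) − 1| ≤ 1/B for μ-almost every x. Define ρ_f(x) := T_{α(x)}(ρ_u(x)). Then ∫_X KL(ρ_u(x)‖ρ_f(x)) dμ(x) ≤ π²/(6·(2 + exp(B) + exp(−B))). -/
open MeasureTheory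

/-- The α-correction of `u`: `T α u = u^α / (u^α + (1-u)^α)`. -/
noncomputable def alphaCorr (α u : ℝ) : ℝ := u ^ α / (u ^ α + (1 - u) ^ α)

/-- KL divergence between `Bernoulli u` and `Bernoulli v`. -/
noncomputable def bernKL (u v : ℝ) : ℝ :=
  u * Real.log (u / v) + (1 - u) * Real.log ((1 - u) / (1 - v))

/-!
Write `σ` for the sigmoid. In the logit coordinate `u = σ t` the `α`-correction is multiplication by
`α`, that is `T_α (σ t) = σ (α t)`, and `s ↦ KL (σ t ‖ σ s)` has derivative `σ s - σ t`. Since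
`σ s - σ t ≤ σ' t * (exp (s - t) - 1)`, the divergence is at most `σ' t * (s - t) ^ 2` as soon as
`|s - t| ≤ 1`. For `s = α t` we have `|s - t| ≤ |t| / B ≤ 1`, and the claimed bound equals
`π² / 6 * σ' B`, so it remains to bound `t ^ 2 * σ' t` by `π² / 6 * B ^ 2 * σ' B`, where
`σ' t = 1 / (4 cosh² (t / 2))`.
-/

section

open Real

lemma cosh_le_of_abs_le_one {x : ℝ} (hx : |x| ≤ 1) :
    cosh x ≤ 1 + x ^ 2 / 2 + 5 / 96 * x ^ 4 := by
  have exp_le {y : ℝ} (hy : |y| ≤ 1) :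
      exp y ≤ 1 + y + y ^ 2 / 2 + y ^ 3 / 6 + 5 / 96 * y ^ 4 := by
    have h := (abs_le.1 (exp_bound hy (n := 4) (by norm_num))).2
    norm_num [Finset.sum_range_succ, Nat.factorial, Even.pow_abs (show Even 4 by decide)] at h
    linarith
  rw [cosh_eq]
  linarith [exp_le hx, exp_le ((abs_neg x).trans_le hx)]

lemma cosh_le_one_add_mul_sq {x : ℝ} (hx : |x| ≤ 3 / 2) : cosh x ≤ 1 + 16 / 25 * x ^ 2 := by
  have hx_half : |x / 2| ≤ 3 / 4 := by
    rw [abs_div, abs_two]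
    linarith
  have h_quartic : (x / 2) ^ 4 ≤ 9 / 16 * (x / 2) ^ 2 := by
    calc (x / 2) ^ 4 = |x / 2| ^ 2 * (x / 2) ^ 2 := by rw [sq_abs]; ring
      _ ≤ (3 / 4) ^ 2 * (x / 2) ^ 2 := by gcongr
      _ = 9 / 16 * (x / 2) ^ 2 := by norm_num
  have h_half : cosh (x / 2) ≤ 1 + 53 / 100 * (x / 2) ^ 2 := by
    linarith [cosh_le_of_abs_le_one (hx_half.trans (by norm_num)), sq_nonneg (x / 2)]
  calc cosh x = 2 * cosh (x / 2) ^ 2 - 1 := by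
        rw [← mul_div_cancel₀ x two_ne_zero, cosh_two_mul, sinh_sq]
        ring_nf
    _ ≤ 2 * (1 + 53 / 100 * (x / 2) ^ 2) ^ 2 - 1 := by gcongr
    _ ≤ 1 + 16 / 25 * x ^ 2 := by linarith [sq_nonneg x]

lemma one_add_sq_div_two_le_cosh (x : ℝ) : 1 + x ^ 2 / 2 ≤ cosh x := by
  have h_half : cosh x = 1 + 2 * sinh (x / 2) ^ 2 := by
    rw [← mul_div_cancel₀ x two_ne_zero, cosh_two_mul, cosh_sq]
    ring_nf
  have h_sinh : (x / 2) ^ 2 ≤ sinh (x / 2) ^ 2 := by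
    rw [sq_le_sq, abs_sinh]
    exact self_le_sinh_iff.2 (abs_nonneg _)
  linarith

-- The factor `32 / 25` is a rational just below `π / √6`.
lemma mul_cosh_le_mul_cosh {s b : ℝ} (hs : 0 ≤ s) (hsb : s ≤ b) (hb : b ≤ 3 / 2) :
    s * cosh b ≤ 32 / 25 * (b * cosh s) := by
  have hb0 : 0 ≤ b := hs.trans hsb
  calc s * cosh b ≤ s * (1 + 16 / 25 * b ^ 2) := by
        gcongr
        exact cosh_le_one_add_mul_sq (by rwa [abs_of_nonneg hb0])
    _ ≤ 32 / 25 * (b * (1 + s ^ 2 / 2)) := by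
        have h_cubic : s * (b - s) * b ≤ s * (b - s) * (3 / 2) :=
          mul_le_mul_of_nonneg_left hb (mul_nonneg hs (sub_nonneg.2 hsb))
        have h_quadratic : 24 / 25 * (s * (b - s)) ≤ 32 / 25 * b - s := by
          nlinarith [mul_nonneg hs (sub_nonneg.2 hb), sq_nonneg (s - 6 / 5)]
        linarith
    _ ≤ 32 / 25 * (b * cosh s) := by
        gcongr
        exact one_add_sq_div_two_le_cosh s

lemma two_add_exp_add_exp_neg (x : ℝ) : 2 + exp x + exp (-x) = 4 * cosh (x / 2) ^ 2 := by
  have h := cosh_sq (x / 2)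
  have h' := cosh_two_mul (x / 2)
  rw [mul_div_cancel₀ x two_ne_zero, cosh_eq] at h'
  linarith

lemma sigmoid_mul_one_sub_eq_inv (x : ℝ) :
    sigmoid x * (1 - sigmoid x) = (2 + exp x + exp (-x))⁻¹ := by
  rw [← sigmoid_neg, sigmoid_def, sigmoid_def, neg_neg, ← mul_inv]
  congr 1
  have h_inv : exp (-x) * exp x = 1 := by rw [← exp_add, neg_add_cancel, exp_zero]
  linear_combination h_inv

lemma sigmoid_mul_one_sub_nonneg (x : ℝ) : 0 ≤ sigmoid x * (1 - sigmoid x) :=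
  mul_nonneg (sigmoid_nonneg x) (sub_nonneg.2 (sigmoid_le_one x))

lemma sigmoid_mul_one_sub_mul_sq_le {t B : ℝ} (htB : |t| ≤ B) (hB : B ≤ 3) :
    sigmoid t * (1 - sigmoid t) * t ^ 2 ≤ π ^ 2 / 6 * (sigmoid B * (1 - sigmoid B)) * B ^ 2 := by
  have h_cosh : |t| / 2 * cosh (B / 2) ≤ 32 / 25 * (B / 2 * cosh (|t| / 2)) :=
    mul_cosh_le_mul_cosh (by positivity) (by linarith) (by linarith)
  have h_sq : t ^ 2 * cosh (B / 2) ^ 2 ≤ π ^ 2 / 6 * (B ^ 2 * cosh (t / 2) ^ 2) := by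
    have h_abs : cosh (|t| / 2) = cosh (t / 2) := by
      rw [← cosh_abs (t / 2), abs_div, abs_two]
    have h_pi : (32 / 25) ^ 2 ≤ π ^ 2 / 6 := by nlinarith [pi_gt_d2]
    calc t ^ 2 * cosh (B / 2) ^ 2 = 4 * (|t| / 2 * cosh (B / 2)) ^ 2 := by
          rw [mul_pow, div_pow, sq_abs]; ring
      _ ≤ 4 * (32 / 25 * (B / 2 * cosh (t / 2))) ^ 2 := by
          rw [h_abs] at h_cosh
          gcongr
      _ = (32 / 25) ^ 2 * (B ^ 2 * cosh (t / 2) ^ 2) := by ring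
      _ ≤ π ^ 2 / 6 * (B ^ 2 * cosh (t / 2) ^ 2) := by gcongr
  rw [sigmoid_mul_one_sub_eq_inv, sigmoid_mul_one_sub_eq_inv, two_add_exp_add_exp_neg,
    two_add_exp_add_exp_neg]
  field_simp
  linarith

lemma sigmoid_mul_one_sub_add_mul_exp (s t : ℝ) :
    sigmoid s * (1 - sigmoid t + sigmoid t * exp (s - t)) = sigmoid t * exp (s - t) := by
  have h_exp : exp (-t) = exp (-s) * exp (s - t) := by rw [← exp_add]; ring_nf
  rw [← sigmoid_neg, ← sigmoid_mul_rexp_neg, h_exp, sigmoid_def s]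
  field

lemma sigmoid_sub_sigmoid_le (s t : ℝ) :
    sigmoid s - sigmoid t ≤ sigmoid t * (1 - sigmoid t) * (exp (s - t) - 1) := by
  have h_compl : 0 < 1 - sigmoid t := sub_pos.2 (sigmoid_lt_one t)
  have hσ := sigmoid_pos t
  have h_denom : 0 < 1 - sigmoid t + sigmoid t * exp (s - t) := by positivity
  refine le_of_mul_le_mul_right ?_ h_denom
  have h_gap : 0 ≤ sigmoid t ^ 2 * (1 - sigmoid t) * (exp (s - t) - 1) ^ 2 := by positivity
  linear_combination h_gap + sigmoid_mul_one_sub_add_mul_exp s t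

lemma alphaCorr_sigmoid (α t : ℝ) : alphaCorr α (sigmoid t) = sigmoid (α * t) := by
  have hσ : sigmoid t ^ α ≠ 0 := (rpow_pos_of_pos (sigmoid_pos t) α).ne'
  have h_compl : (1 - sigmoid t) ^ α = sigmoid t ^ α * exp (-(α * t)) := by
    rw [← sigmoid_neg, ← sigmoid_mul_rexp_neg, mul_rpow (sigmoid_nonneg t) (exp_pos _).le,
      ← exp_mul, neg_mul, mul_comm t]
  rw [alphaCorr, h_compl, sigmoid_def (α * t)]
  field_simp

lemma bernKL_one_sub_one_sub (u v : ℝ) : bernKL (1 - u) (1 - v) = bernKL u v := by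
  simp only [bernKL, sub_sub_cancel, add_comm]

lemma bernKL_self (u : ℝ) : bernKL u u = 0 := by
  rcases eq_or_ne u 0 with rfl | h0
  · simp [bernKL]
  rcases eq_or_ne (1 - u) 0 with h1 | h1 <;> simp [bernKL, h0, h1]

lemma sub_le_mul_log_div {u v : ℝ} (hu : 0 ≤ u) (hv : 0 < v) : u - v ≤ u * log (u / v) := by
  rcases hu.eq_or_lt with rfl | hu
  · simpa using hv.le
  calc u - v = u * (1 - (u / v)⁻¹) := by field_simp
    _ ≤ u * log (u / v) := by
        gcongr
        exact one_sub_inv_le_log_of_pos (by positivity)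

lemma bernKL_nonneg {u v : ℝ} (hu : u ∈ Set.Icc 0 1) (hv : v ∈ Set.Ioo 0 1) : 0 ≤ bernKL u v := by
  have h := sub_le_mul_log_div hu.1 hv.1
  have h_compl := sub_le_mul_log_div (sub_nonneg.2 hu.2) (sub_pos.2 hv.2)
  rw [bernKL]
  linarith

lemma hasDerivAt_mul_log_const_div (u : ℝ) {f : ℝ → ℝ} {f' x : ℝ} (hf : HasDerivAt f f' x)
    (hx : f x ≠ 0) : HasDerivAt (fun y ↦ u * log (u / f y)) (-(u * (f' / f x))) x := by
  rcases eq_or_ne u 0 with rfl | hu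
  · simpa using hasDerivAt_const x (0 : ℝ)
  have h_div := (hasDerivAt_const x u).fun_div hf hx
  refine ((h_div.log (div_ne_zero hu hx)).const_mul u).congr_deriv ?_
  field

lemma hasDerivAt_bernKL_sigmoid (u s : ℝ) :
    HasDerivAt (fun y ↦ bernKL u (sigmoid y)) (sigmoid s - u) s := by
  have h_ne : sigmoid s ≠ 0 := (sigmoid_pos s).ne'
  have h_ne' : 1 - sigmoid s ≠ 0 := (sub_pos.2 (sigmoid_lt_one s)).ne'
  have h_left := hasDerivAt_mul_log_const_div u (hasDerivAt_sigmoid s) h_ne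
  have h_right := hasDerivAt_mul_log_const_div (1 - u) ((hasDerivAt_sigmoid s).const_sub 1) h_ne'
  refine (h_left.fun_add h_right).congr_deriv ?_
  field

lemma bernKL_sigmoid_le_of_le {s t : ℝ} (hts : t ≤ s) :
    bernKL (sigmoid t) (sigmoid s) ≤
      sigmoid t * (1 - sigmoid t) * (exp (s - t) - 1 - (s - t)) := by
  let gap : ℝ → ℝ := fun y ↦ sigmoid t * (1 - sigmoid t) * (exp (y - t) - 1 - (y - t)) -
    bernKL (sigmoid t) (sigmoid y)
  have h_deriv (y : ℝ) : HasDerivAt gap (sigmoid t * (1 - sigmoid t) * (exp (y - t) - 1) -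
      (sigmoid y - sigmoid t)) y := by
    have h_sub := (hasDerivAt_id y).sub_const t
    refine ((((h_sub.exp.sub_const 1).fun_sub h_sub).const_mul _).fun_sub
      (hasDerivAt_bernKL_sigmoid (sigmoid t) y)).congr_deriv ?_
    simp only [id, mul_one]
  have h_mono : Monotone gap := monotone_of_hasDerivAt_nonneg h_deriv fun y ↦
    sub_nonneg.2 (sigmoid_sub_sigmoid_le y t)
  simpa [gap, bernKL_self] using h_mono hts

lemma bernKL_sigmoid_le (s t : ℝ) :
    bernKL (sigmoid t) (sigmoid s) ≤
      sigmoid t * (1 - sigmoid t) * (exp |s - t| - 1 - |s - t|) := by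
  rcases le_total t s with hts | hst
  · rw [abs_of_nonneg (sub_nonneg.2 hts)]
    exact bernKL_sigmoid_le_of_le hts
  · have h := bernKL_sigmoid_le_of_le (neg_le_neg hst)
    rw [sigmoid_neg, sigmoid_neg, bernKL_one_sub_one_sub, sub_sub_cancel, mul_comm (1 - _),
      neg_sub_neg] at h
    rwa [abs_sub_comm, abs_of_nonneg (sub_nonneg.2 hst)]

lemma bernKL_sigmoid_le_sq {s t : ℝ} (hst : |s - t| ≤ 1) :
    bernKL (sigmoid t) (sigmoid s) ≤ sigmoid t * (1 - sigmoid t) * (s - t) ^ 2 := by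
  have h_exp := (le_abs_self _).trans (abs_exp_sub_one_sub_id_le ((abs_abs _).trans_le hst))
  rw [sq_abs] at h_exp
  exact (bernKL_sigmoid_le s t).trans <|
    mul_le_mul_of_nonneg_left h_exp (sigmoid_mul_one_sub_nonneg t)

lemma bernKL_alphaCorr_nonneg (α : ℝ) {u : ℝ} (hu : u ∈ Set.Ioo 0 1) :
    0 ≤ bernKL u (alphaCorr α u) := by
  obtain ⟨t, rfl⟩ := range_sigmoid ▸ hu
  rw [alphaCorr_sigmoid]
  exact bernKL_nonneg (Set.Ioo_subset_Icc_self hu) ⟨sigmoid_pos _, sigmoid_lt_one _⟩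

lemma bernKL_alphaCorr_le {u α B : ℝ} (hB0 : 0 < B) (hB3 : B ≤ 3)
    (hu : u ∈ Set.Icc (sigmoid (-B)) (sigmoid B)) (hα : |α - 1| ≤ 1 / B) :
    bernKL u (alphaCorr α u) ≤ π ^ 2 / 6 * (sigmoid B * (1 - sigmoid B)) := by
  obtain ⟨t, ht, rfl⟩ :=
    intermediate_value_Icc (neg_le_self hB0.le) continuous_sigmoid.continuousOn hu
  have htB : |t| ≤ B := abs_le.2 ht
  have h_shift : |α * t - t| ≤ |t| / B := by
    rw [← sub_one_mul, abs_mul, div_eq_mul_one_div, mul_comm]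
    gcongr
  have h_var := sigmoid_mul_one_sub_nonneg t
  calc bernKL (sigmoid t) (alphaCorr α (sigmoid t))
      = bernKL (sigmoid t) (sigmoid (α * t)) := by rw [alphaCorr_sigmoid]
    _ ≤ sigmoid t * (1 - sigmoid t) * (α * t - t) ^ 2 :=
        bernKL_sigmoid_le_sq (h_shift.trans ((div_le_one hB0).2 htB))
    _ ≤ sigmoid t * (1 - sigmoid t) * (|t| / B) ^ 2 := by
        rw [← sq_abs (α * t - t)]
        gcongr
    _ = sigmoid t * (1 - sigmoid t) * t ^ 2 / B ^ 2 := by rw [div_pow, sq_abs, mul_div_assoc]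
    _ ≤ π ^ 2 / 6 * (sigmoid B * (1 - sigmoid B)) :=
        (div_le_iff₀ (by positivity)).2 (sigmoid_mul_one_sub_mul_sq_le htB hB3)

end

/-- Data-independent proximity bound under setting (S1): if `0 < B ≤ 3`, the black-box
posterior `ρᵤ` is a.e. clipped to `[1/(1+e^B), 1/(1+e^{−B})]` and `|α − 1| ≤ 1/B` a.e.,
then the expected KL divergence between `ρᵤ` and the wrapped posterior
`ρ_f = T_{α(x)}(ρᵤ(x))` is at most `π²/(6(2 + e^B + e^{−B}))`. -/
theorem integral_bernKL_alphaCorr_le {X : Type*} [MeasurableSpace X]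
    (μ : Measure X) [IsProbabilityMeasure μ]
    (B : ℝ) (hB0 : 0 < B) (hB3 : B ≤ 3)
    (ρu : X → ℝ) (hρum : Measurable ρu)
    (α : X → ℝ) (hαm : Measurable α)
    (hρu : ∀ᵐ x ∂μ, 1 / (1 + Real.exp B) ≤ ρu x ∧ ρu x ≤ 1 / (1 + Real.exp (-B)))
    (hα : ∀ᵐ x ∂μ, |α x - 1| ≤ 1 / B) :
    ∫ x, bernKL (ρu x) (alphaCorr (α x) (ρu x)) ∂μ ≤
      Real.pi ^ 2 / (6 * (2 + Real.exp B + Real.exp (-B))) := by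
  have h_mem : ∀ᵐ x ∂μ, bernKL (ρu x) (alphaCorr (α x) (ρu x)) ∈
      Set.Icc 0 (Real.pi ^ 2 / 6 * (Real.sigmoid B * (1 - Real.sigmoid B))) := by
    filter_upwards [hρu, hα] with x hρx hαx
    have hρx : ρu x ∈ Set.Icc (Real.sigmoid (-B)) (Real.sigmoid B) := by
      simpa only [Set.mem_Icc, Real.sigmoid_def, neg_neg, one_div] using hρx
    have hρx_Ioo : ρu x ∈ Set.Ioo 0 1 :=
      ⟨(Real.sigmoid_pos _).trans_le hρx.1, hρx.2.trans_lt (Real.sigmoid_lt_one _)⟩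
    exact ⟨bernKL_alphaCorr_nonneg _ hρx_Ioo, bernKL_alphaCorr_le hB0 hB3 hρx hαx⟩
  have h_int : Integrable (fun x ↦ bernKL (ρu x) (alphaCorr (α x) (ρu x))) μ := by
    refine .of_mem_Icc _ _ (Measurable.aemeasurable ?_) h_mem
    unfold bernKL alphaCorr
    fun_prop
  calc ∫ x, bernKL (ρu x) (alphaCorr (α x) (ρu x)) ∂μ
      ≤ ∫ _, Real.pi ^ 2 / 6 * (Real.sigmoid B * (1 - Real.sigmoid B)) ∂μ :=
        integral_mono_ae h_int (integrable_const _) (h_mem.mono fun _ h ↦ h.2)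
    _ = Real.pi ^ 2 / (6 * (2 + Real.exp B + Real.exp (-B))) := by
        rw [integral_const, probReal_univ, one_smul, sigmoid_mul_one_sub_eq_inv,
          ← div_eq_mul_inv, div_div]
end

section
/- (Entropy upper bound for audacious α-tree scoring.) Let μ be a probability measure on a measurable space X, let η̃ : X → [0,1] be measurable, let B > 0, and let ρ_u : X → ℝ be measurable with 1/(1+exp(B)) ≤ ρ_u(x) ≤ 1/(1+exp(−B)) for all x. Write λ(x) := logit(ρ_u(x))/B ∈ [−1,1]. Let A_1, …, A_n be a finite measurable partition of X with μ(A_i) > 0 for each i, and define e_i⁺ := (1/μ(A_i)) · ∫_{A_i} [ η̃(x)·max(0, λ(x)) + (1−η̃(x))·max(0, −λ(x)) ] dμ(x) and e_i⁻ := (1/μ(A_i)) · ∫_{A_i} [ η̃(x)·max(0, −λ(x)) + (1−η̃(x))·max(0, λ(x)) ] dμ(x); assume e_i⁺ > 0 and e_i⁻ > 0 for each i. Define α(x) := (1/B)·log(e_i⁺/e_i⁻) for x ∈ A_i, and ρ_f(x) := T_{α(x)}(ρ_u(x)). Then ∫_X [ η̃(x)·(−log ρ_f(x)) + (1 − η̃(x))·(−log(1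 − ρ_f(x))) ] dμ(x) ≤ Σ_{i=1}^n μ(A_i) · log(2)·(1 + (e_i⁺ + e_i⁻)·(H(e_i⁺/(e_i⁺+e_i⁻))/log 2 − 1)). -/
open MeasureTheory

/-- `logit u = log(u/(1−u))`. -/
noncomputable def logit (u : ℝ) : ℝ := Real.log (u / (1 - u))

/-- Binary Shannon entropy with natural logarithm (`0·log 0 = 0` by convention). -/
noncomputable def binEnt (q : ℝ) : ℝ := -q * Real.log q - (1 - q) * Real.log (1 - q)

/-! In the coordinate `λ = logit ρ / B` the α-correction is `T_α(ρ) = σ(α B λ)` with `σ` the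
logistic sigmoid, so on a leaf the log-loss is a combination of `-log σ(± L λ)` with
`L = log (e⁺ / e⁻)`. Since `-log ∘ σ` is convex and `|λ| ≤ 1`, each term lies below its chord
between `0` and `± L`, which bounds the log-loss by an affine function of the positive and negative
parts of the alignment edge. Integrating over the leaf replaces these by `e⁺` and `e⁻`, and as
`σ(L) = e⁺ / (e⁺ + e⁻)` the outcome is exactly the entropy bound. That bound never exceeds `log 2`,
so leaves can be summed over any countable partition. -/

section

open Real Set

/-- Conditional risk `η·(-log q) + (1 - η)·(-log (1 - q))` of the log-loss when `q` is predicted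
for a label that is positive with probability `η`. -/
noncomputable def logLossRisk (η q : ℝ) : ℝ := η * (-log q) + (1 - η) * (-log (1 - q))

/-- Conditional expectation of `max 0 (y * l)` for a label `y = ±1` that is `1` with probability
`η`: the pointwise positive part of the alignment edge at normalized logit `l`. The pointwise
negative part is `posEdge η (-l)`. -/
noncomputable def posEdge (η l : ℝ) : ℝ := η * max 0 l + (1 - η) * max 0 (-l)

/-- The entropy bound of a leaf whose alignment edge has positive part `p` and negative part `m`;
natural logarithms are used, hence the division of `binEnt` by `log 2`. -/
noncomputable def leafEntropy (p m : ℝ) : ℝ :=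
  log 2 * (1 + (p + m) * (binEnt (p / (p + m)) / log 2 - 1))

lemma hasDerivAt_log_sigmoid (x : ℝ) :
    HasDerivAt (fun y ↦ log (sigmoid y)) (sigmoid (-x)) x := by
  have h := (hasDerivAt_sigmoid x).log (sigmoid_pos x).ne'
  rwa [mul_div_cancel_left₀ _ (sigmoid_pos x).ne', ← sigmoid_neg] at h

lemma concaveOn_log_sigmoid : ConcaveOn ℝ univ fun x ↦ log (sigmoid x) := by
  refine Antitone.concaveOn_univ_of_deriv (fun x ↦ (hasDerivAt_log_sigmoid x).differentiableAt) ?_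
  rw [funext fun x ↦ (hasDerivAt_log_sigmoid x).deriv]
  exact fun x y hxy ↦ sigmoid_le (neg_le_neg hxy)

lemma neg_log_sigmoid_mul_le_of_mem_Icc {s : ℝ} (hs : s ∈ Icc 0 1) (y : ℝ) :
    -log (sigmoid (s * y)) ≤ log 2 - s * (log 2 + log (sigmoid y)) := by
  have chord := concaveOn_log_sigmoid.2 (mem_univ 0) (mem_univ y) (sub_nonneg.2 hs.2) hs.1
    (sub_add_cancel 1 s)
  simp only [smul_eq_mul, mul_zero, zero_add, sigmoid_zero, log_inv] at chord
  linarith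

lemma neg_log_sigmoid_mul_le {l : ℝ} (hl : |l| ≤ 1) (y : ℝ) :
    -log (sigmoid (l * y)) ≤
      log 2 - max 0 l * (log 2 + log (sigmoid y)) - max 0 (-l) * (log 2 + log (sigmoid (-y))) := by
  obtain ⟨hl₁, hl₂⟩ := abs_le.1 hl
  rcases le_total 0 l with h | h
  · have := neg_log_sigmoid_mul_le_of_mem_Icc ⟨h, hl₂⟩ y
    rw [max_eq_right h, max_eq_left (neg_nonpos.2 h)]
    linarith
  · have := neg_log_sigmoid_mul_le_of_mem_Icc ⟨neg_nonneg.2 h, neg_le.1 hl₁⟩ (-y)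
    rw [neg_mul_neg] at this
    rw [max_eq_left h, max_eq_right (neg_nonneg.2 h)]
    linarith

lemma sigmoid_logit {u : ℝ} (hu : u ∈ Ioo 0 1) : sigmoid (logit u) = u := by
  have hu₀ : 0 < u := hu.1
  have hu₁ : 0 < 1 - u := sub_pos.2 hu.2
  rw [sigmoid_def, logit, exp_neg, exp_log (div_pos hu₀ hu₁)]
  field_simp
  ring

lemma alphaCorr_eq_sigmoid (a : ℝ) {u : ℝ} (hu : u ∈ Ioo 0 1) :
    alphaCorr a u = sigmoid (a * logit u) := by
  have hu₀ : 0 < u := hu.1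
  have hu₁ : 0 < 1 - u := sub_pos.2 hu.2
  have hexp : exp (a * logit u) = u ^ a / (1 - u) ^ a := by
    rw [logit, mul_comm, exp_mul, exp_log (div_pos hu₀ hu₁), div_rpow hu₀.le hu₁.le]
  rw [sigmoid_def, exp_neg, hexp, alphaCorr]
  field_simp

lemma mem_Ioo_of_mem_Icc_sigmoid {a b u : ℝ} (hu : u ∈ Icc (sigmoid a) (sigmoid b)) :
    u ∈ Ioo 0 1 :=
  ⟨(sigmoid_pos a).trans_le hu.1, hu.2.trans_lt (sigmoid_lt_one b)⟩

lemma logit_mem_Icc {a b u : ℝ} (hu : u ∈ Icc (sigmoid a) (sigmoid b)) : logit u ∈ Icc a b := by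
  rwa [← sigmoid_logit (mem_Ioo_of_mem_Icc_sigmoid hu), mem_Icc, sigmoid_le_iff,
    sigmoid_le_iff] at hu

lemma measurable_logit : Measurable logit :=
  measurable_log.comp (measurable_id.div (measurable_const.sub measurable_id))

lemma posEdge_neg (η l : ℝ) : posEdge η (-l) = η * max 0 (-l) + (1 - η) * max 0 l := by
  rw [posEdge, neg_neg]

lemma posEdge_nonneg {η : ℝ} (hη : η ∈ Icc 0 1) (l : ℝ) : 0 ≤ posEdge η l :=
  add_nonneg (mul_nonneg hη.1 (le_max_left _ _)) (mul_nonneg (sub_nonneg.2 hη.2) (le_max_left _ _))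

lemma posEdge_le_abs {η : ℝ} (hη : η ∈ Icc 0 1) (l : ℝ) : posEdge η l ≤ |l| :=
  calc posEdge η l ≤ η * |l| + (1 - η) * |l| := add_le_add
        (mul_le_mul_of_nonneg_left (max_le (abs_nonneg l) (le_abs_self l)) hη.1)
        (mul_le_mul_of_nonneg_left (max_le (abs_nonneg l) (neg_le_abs l)) (sub_nonneg.2 hη.2))
    _ = |l| := by ring

lemma logLossRisk_nonneg {η q : ℝ} (hη : η ∈ Icc 0 1) (hq : q ∈ Icc 0 1) : 0 ≤ logLossRisk η q :=
  add_nonneg (mul_nonneg hη.1 (neg_nonneg.2 (log_nonpos hq.1 hq.2)))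
    (mul_nonneg (sub_nonneg.2 hη.2)
      (neg_nonneg.2 (log_nonpos (sub_nonneg.2 hq.2) (sub_le_self 1 hq.1))))

lemma logLossRisk_sigmoid_mul_le {η l : ℝ} (hη : η ∈ Icc 0 1) (hl : |l| ≤ 1) (y : ℝ) :
    logLossRisk η (sigmoid (y * l)) ≤ log 2 - posEdge η l * (log 2 + log (sigmoid y))
      - posEdge η (-l) * (log 2 + log (sigmoid (-y))) := by
  have hpos := mul_le_mul_of_nonneg_left (neg_log_sigmoid_mul_le hl y) hη.1
  have hneg := mul_le_mul_of_nonneg_left (neg_log_sigmoid_mul_le hl (-y)) (sub_nonneg.2 hη.2)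
  rw [neg_neg] at hneg
  rw [logLossRisk, ← sigmoid_neg, mul_comm y l, ← mul_neg, posEdge_neg, posEdge]
  linarith

lemma sigmoid_log_div {p m : ℝ} (hp : 0 < p) (hm : 0 < m) :
    sigmoid (log (p / m)) = p / (p + m) := by
  rw [sigmoid_def, exp_neg, exp_log (div_pos hp hm)]
  field_simp

lemma leafEntropy_eq {p m : ℝ} (hp : 0 < p) (hm : 0 < m) :
    leafEntropy p m = log 2 - p * (log 2 + log (sigmoid (log (p / m))))
      - m * (log 2 + log (sigmoid (-log (p / m)))) := by
  have hs : p + m ≠ 0 := (add_pos hp hm).ne'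
  have hlog : log 2 ≠ 0 := (log_pos one_lt_two).ne'
  rw [sigmoid_neg, sigmoid_log_div hp hm, leafEntropy, binEnt]
  field_simp
  ring

lemma binEnt_eq_binEntropy (q : ℝ) : binEnt q = binEntropy q := by
  rw [binEnt, binEntropy, log_inv, log_inv]
  ring

lemma leafEntropy_le_log_two {p m : ℝ} (hpm : 0 ≤ p + m) : leafEntropy p m ≤ log 2 := by
  have hlog : 0 < log 2 := log_pos one_lt_two
  have hent : binEnt (p / (p + m)) / log 2 ≤ 1 := by
    rw [div_le_one hlog, binEnt_eq_binEntropy]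
    exact binEntropy_le_log_two
  refine mul_le_of_le_one_right hlog.le (add_le_of_nonpos_right ?_)
  exact mul_nonpos_of_nonneg_of_nonpos hpm (sub_nonpos.2 hent)

section Leaf

variable {X : Type*} [MeasurableSpace X] {ν : Measure X} [IsFiniteMeasure ν] {η l : X → ℝ}

lemma integrable_posEdge {C : ℝ} (hηm : AEMeasurable η ν) (hη : ∀ x, η x ∈ Icc 0 1)
    (hlm : AEMeasurable l ν) (hl : ∀ x, |l x| ≤ C) :
    Integrable (fun x ↦ posEdge (η x) (l x)) ν := by
  refine .of_bound (C := C) ?_ (.of_forall fun x ↦ ?_)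
  · unfold posEdge
    fun_prop
  · rw [norm_of_nonneg (posEdge_nonneg (hη x) _)]
    exact (posEdge_le_abs (hη x) _).trans (hl x)

lemma integrable_const_sub_posEdge_mul {C : ℝ} (hηm : AEMeasurable η ν) (hη : ∀ x, η x ∈ Icc 0 1)
    (hlm : AEMeasurable l ν) (hl : ∀ x, |l x| ≤ C) (c a b : ℝ) :
    Integrable (fun x ↦ c - posEdge (η x) (l x) * a - posEdge (η x) (-l x) * b) ν :=
  ((integrable_const _).sub ((integrable_posEdge hηm hη hlm hl).mul_const a)).sub
    ((integrable_posEdge hηm hη hlm.neg (by simpa using hl)).mul_const b)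

lemma integrable_logLossRisk_sigmoid (hηm : AEMeasurable η ν) (hη : ∀ x, η x ∈ Icc 0 1)
    (hlm : AEMeasurable l ν) (hl : ∀ x, |l x| ≤ 1) (y : ℝ) :
    Integrable (fun x ↦ logLossRisk (η x) (sigmoid (y * l x))) ν := by
  refine (integrable_const_sub_posEdge_mul hηm hη hlm hl (log 2) (log 2 + log (sigmoid y))
    (log 2 + log (sigmoid (-y)))).mono' ?_ (.of_forall fun x ↦ ?_)
  · unfold logLossRisk sigmoid
    fun_prop
  · rw [norm_of_nonneg (logLossRisk_nonneg (hη x) ⟨sigmoid_nonneg _, sigmoid_le_one _⟩)]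
    exact logLossRisk_sigmoid_mul_le (hη x) (hl x) y

lemma integral_logLossRisk_sigmoid_le (hηm : AEMeasurable η ν) (hη : ∀ x, η x ∈ Icc 0 1)
    (hlm : AEMeasurable l ν) (hl : ∀ x, |l x| ≤ 1) {p m : ℝ} (hp : 0 < p) (hm : 0 < m)
    (hp_eq : p = ⨍ x, posEdge (η x) (l x) ∂ν) (hm_eq : m = ⨍ x, posEdge (η x) (-l x) ∂ν) :
    ∫ x, logLossRisk (η x) (sigmoid (log (p / m) * l x)) ∂ν ≤ ν.real univ * leafEntropy p m := by
  have hP := integrable_posEdge hηm hη hlm hl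
  have hM : Integrable (fun x ↦ posEdge (η x) (-l x)) ν :=
    integrable_posEdge hηm hη hlm.neg (by simpa using hl)
  have hP_int : ∫ x, posEdge (η x) (l x) ∂ν = ν.real univ * p := by
    rw [hp_eq, ← smul_eq_mul, measure_smul_average]
  have hM_int : ∫ x, posEdge (η x) (-l x) ∂ν = ν.real univ * m := by
    rw [hm_eq, ← smul_eq_mul, measure_smul_average]
  set a := log 2 + log (sigmoid (log (p / m)))
  set b := log 2 + log (sigmoid (-log (p / m)))
  have hconst_sub_P : Integrable (fun x ↦ log 2 - posEdge (η x) (l x) * a) ν :=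
    (integrable_const _).sub (hP.mul_const a)
  calc ∫ x, logLossRisk (η x) (sigmoid (log (p / m) * l x)) ∂ν
      ≤ ∫ x, (log 2 - posEdge (η x) (l x) * a - posEdge (η x) (-l x) * b) ∂ν :=
        integral_mono (integrable_logLossRisk_sigmoid hηm hη hlm hl _)
          (integrable_const_sub_posEdge_mul hηm hη hlm hl (log 2) a b)
          fun x ↦ logLossRisk_sigmoid_mul_le (hη x) (hl x) _
    _ = ν.real univ * log 2 - ν.real univ * p * a - ν.real univ * m * b := by
        rw [integral_sub hconst_sub_P (hM.mul_const b),
          integral_sub (integrable_const _) (hP.mul_const a), integral_mul_const,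
          integral_mul_const, integral_const, hP_int, hM_int, smul_eq_mul]
    _ = ν.real univ * leafEntropy p m := by
        rw [leafEntropy_eq hp hm]
        ring

end Leaf

section Partition

variable {X ι : Type*} [MeasurableSpace X] [Countable ι] {μ : Measure X} {A : ι → Set X}
  {f : X → ℝ} {b : ι → ℝ}

lemma integrable_of_setIntegral_le (hcover : ⋃ i, A i = univ) (hf : ∀ x, 0 ≤ f x)
    (hfi : ∀ i, IntegrableOn f (A i) μ) (hfb : ∀ i, ∫ x in A i, f x ∂μ ≤ b i) (hb : Summable b) :
    Integrable f μ := by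
  rw [← integrableOn_univ, ← hcover]
  refine integrableOn_iUnion_of_summable_integral_norm hfi ?_
  simp only [norm_of_nonneg (hf _)]
  exact hb.of_nonneg_of_le (fun i ↦ integral_nonneg hf) hfb

lemma integral_le_tsum_of_setIntegral_le (hA : ∀ i, MeasurableSet (A i))
    (hdisj : Pairwise (Function.onFun Disjoint A)) (hcover : ⋃ i, A i = univ)
    (hfi : Integrable f μ) (hfb : ∀ i, ∫ x in A i, f x ∂μ ≤ b i) (hb : Summable b) :
    ∫ x, f x ∂μ ≤ ∑' i, b i := by
  have hsum := hasSum_integral_iUnion hA hdisj hfi.integrableOn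
  rw [hcover, setIntegral_univ] at hsum
  exact hasSum_le hfb hsum hb.hasSum

lemma summable_measureReal [IsFiniteMeasure μ] (hA : ∀ i, MeasurableSet (A i))
    (hdisj : Pairwise (Function.onFun Disjoint A)) : Summable fun i ↦ μ.real (A i) := by
  simpa using (hasSum_integral_iUnion hA hdisj (integrable_const (1 : ℝ)).integrableOn).summable

end Partition

theorem log_loss_le_entropy_audacious_general {X ι : Type*} [MeasurableSpace X] [Countable ι]
    (μ : Measure X) [IsFiniteMeasure μ]
    (η : X → ℝ) (hηm : AEMeasurable η μ) (hη : ∀ x, η x ∈ Icc 0 1)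
    (B : ℝ) (hB : 0 < B)
    (ρu : X → ℝ) (hρum : AEMeasurable ρu μ) (hρu : ∀ x, ρu x ∈ Icc (sigmoid (-B)) (sigmoid B))
    (A : ι → Set X) (hAm : ∀ i, MeasurableSet (A i))
    (hdisj : Pairwise (Function.onFun Disjoint A)) (hcover : ⋃ i, A i = univ)
    (ep em : ι → ℝ)
    (hep : ∀ i, ep i = ⨍ x in A i, posEdge (η x) (logit (ρu x) / B) ∂μ)
    (hem : ∀ i, em i = ⨍ x in A i, posEdge (η x) (-(logit (ρu x) / B)) ∂μ)
    (hep0 : ∀ i, 0 < ep i) (hem0 : ∀ i, 0 < em i)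
    (ρf : X → ℝ)
    (hρf : ∀ i, ∀ x ∈ A i, ρf x = alphaCorr (1 / B * log (ep i / em i)) (ρu x)) :
    Integrable (fun x ↦ logLossRisk (η x) (ρf x)) μ ∧
      Summable (fun i ↦ μ.real (A i) * leafEntropy (ep i) (em i)) ∧
      ∫ x, logLossRisk (η x) (ρf x) ∂μ ≤ ∑' i, μ.real (A i) * leafEntropy (ep i) (em i) := by
  have hl (x : X) : |logit (ρu x) / B| ≤ 1 := by
    rw [abs_div, abs_of_pos hB, div_le_one hB]
    exact abs_le.2 (logit_mem_Icc (hρu x))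
  have hlm : AEMeasurable (fun x ↦ logit (ρu x) / B) μ :=
    (measurable_logit.comp_aemeasurable hρum).div_const B
  have hρf_sigmoid (i : ι) (x : X) (hx : x ∈ A i) :
      ρf x = sigmoid (log (ep i / em i) * (logit (ρu x) / B)) := by
    rw [hρf i x hx, alphaCorr_eq_sigmoid _ (mem_Ioo_of_mem_Icc_sigmoid (hρu x))]
    ring_nf
  have hrisk_eq (i : ι) : EqOn (fun x ↦ logLossRisk (η x) (ρf x))
      (fun x ↦ logLossRisk (η x) (sigmoid (log (ep i / em i) * (logit (ρu x) / B)))) (A i) :=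
    fun x hx ↦ congrArg (logLossRisk (η x)) (hρf_sigmoid i x hx)
  have hrisk_nonneg (x : X) : 0 ≤ logLossRisk (η x) (ρf x) := by
    obtain ⟨i, hx⟩ := iUnion_eq_univ_iff.1 hcover x
    exact (hrisk_eq i hx).ge.trans' (logLossRisk_nonneg (hη x) ⟨sigmoid_nonneg _, sigmoid_le_one _⟩)
  have hleaf_integrable (i : ι) : IntegrableOn (fun x ↦ logLossRisk (η x) (ρf x)) (A i) μ :=
    (integrableOn_congr_fun (hrisk_eq i) (hAm i)).2
      (integrable_logLossRisk_sigmoid hηm.restrict hη hlm.restrict hl _)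
  have hleaf_le (i : ι) :
      ∫ x in A i, logLossRisk (η x) (ρf x) ∂μ ≤ μ.real (A i) * leafEntropy (ep i) (em i) := by
    rw [setIntegral_congr_fun (hAm i) (hrisk_eq i), ← measureReal_restrict_apply_univ]
    exact integral_logLossRisk_sigmoid_le hηm.restrict hη hlm.restrict hl (hep0 i) (hem0 i)
      (hep i) (hem i)
  have hsummable : Summable fun i ↦ μ.real (A i) * leafEntropy (ep i) (em i) :=
    ((summable_measureReal hAm hdisj).mul_right (log 2)).of_nonneg_of_le
      (fun i ↦ (integral_nonneg hrisk_nonneg).trans (hleaf_le i))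
      fun i ↦ mul_le_mul_of_nonneg_left
        (leafEntropy_le_log_two (add_pos (hep0 i) (hem0 i)).le) measureReal_nonneg
  have hintegrable := integrable_of_setIntegral_le hcover hrisk_nonneg hleaf_integrable hleaf_le
    hsummable
  exact ⟨hintegrable, hsummable,
    integral_le_tsum_of_setIntegral_le hAm hdisj hcover hintegrable hleaf_le hsummable⟩

end

/-- Entropy upper bound for audacious α-tree scoring: with `α` constant on each leaf `A i`
equal to `(1/B)·log(eᵢ⁺/eᵢ⁻)` where `eᵢ⁺, eᵢ⁻` are the positive/negative parts of the
alignment edge of the leaf, the log-loss risk of the wrapped posterior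
`ρ_f = T_{α(x)}(ρᵤ(x))` is at most
`∑ᵢ μ(Aᵢ)·log 2·(1 + (eᵢ⁺+eᵢ⁻)(H(eᵢ⁺/(eᵢ⁺+eᵢ⁻))/log 2 − 1))`. -/
theorem log_loss_le_entropy_audacious {X : Type*} [MeasurableSpace X]
    (μ : Measure X) [IsProbabilityMeasure μ]
    (η : X → ℝ) (hηm : Measurable η) (hη : ∀ x, η x ∈ Set.Icc (0 : ℝ) 1)
    (B : ℝ) (hB : 0 < B)
    (ρu : X → ℝ) (hρum : Measurable ρu)
    (hρu : ∀ x, 1 / (1 + Real.exp B) ≤ ρu x ∧ ρu x ≤ 1 / (1 + Real.exp (-B)))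
    (n : ℕ) (A : Fin n → Set X) (hAm : ∀ i, MeasurableSet (A i))
    (hdisj : Pairwise (Function.onFun Disjoint A))
    (hcover : (⋃ i, A i) = Set.univ)
    (hApos : ∀ i, 0 < (μ (A i)).toReal)
    (ep em : Fin n → ℝ)
    (hep : ∀ i, ep i = ((μ (A i)).toReal)⁻¹ *
      ∫ x in A i, (η x * max 0 (logit (ρu x) / B)
        + (1 - η x) * max 0 (-(logit (ρu x) / B))) ∂μ)
    (hem : ∀ i, em i = ((μ (A i)).toReal)⁻¹ *
      ∫ x in A i, (η x * max 0 (-(logit (ρu x) / B))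
        + (1 - η x) * max 0 (logit (ρu x) / B)) ∂μ)
    (hep0 : ∀ i, 0 < ep i) (hem0 : ∀ i, 0 < em i)
    (α : X → ℝ)
    (hα : ∀ i, ∀ x ∈ A i, α x = (1 / B) * Real.log (ep i / em i))
    (ρf : X → ℝ) (hρf : ∀ x, ρf x = alphaCorr (α x) (ρu x)) :
    ∫ x, (η x * (-Real.log (ρf x)) + (1 - η x) * (-Real.log (1 - ρf x))) ∂μ ≤
      ∑ i, (μ (A i)).toReal *
        (Real.log 2 *
          (1 + (ep i + em i) * (binEnt (ep i / (ep i + em i)) / Real.log 2 - 1))) := by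
  refine (log_loss_le_entropy_audacious_general μ η hηm.aemeasurable hη B hB ρu hρum.aemeasurable
    (fun x ↦ ?_) A hAm hdisj hcover ep em (fun i ↦ ?_) (fun i ↦ ?_) hep0 hem0 ρf
    fun i x hx ↦ ?_).2.2.trans_eq (tsum_fintype _)
  · simpa [Real.sigmoid_def] using hρu x
  · rw [hep i, setAverage_eq]; rfl
  · rw [hem i, setAverage_eq]; simp only [posEdge_neg]; rfl
  · rw [hρf x, hα i x hx]
end
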